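/- If a growth rule applied at some position to a pair (S,J) yields the pair (S',J'), then the lattice paths of (S,J) and (S',J') have the same endpoint (the total weight Σ_k μ(s_k,j_k) is unchanged); moreover, if J is dominant for S then J' is dominant for S'. -/

import Mathlib

/-!
A growth rule replaces a block of one or two letters, and the lattice paths before and after agree
outside this block: the block keeps its total weight, by inspection of the rules. So the endpoint is
unchanged, and for dominance only the points strictly inside the new block need attention. A U-rule
or Y-rule leaves no such point. An H-rule leaves exactly one, and its coordinates are nonnegative
because the three old points of the block (start, middle, end) lie in the chamber; for example, if
`(+, -)` carries the states `(1, 0)`, the old block ends at `π + (2, -1)`, which makes the new middle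
point `π + (1, -1)` nonnegative.

To reduce to the block, dominance is phrased for paths with an arbitrary starting point
(`StaysFrom`), which satisfies a one-letter recursion (`staysFrom_cons`) and hence passes through a
common prefix (`StaysFrom.append_left`).
-/

noncomputable section

/-- The ground field `K = ℚ(v)`. -/
abbrev K : Type := RatFunc ℚ

/-- The indeterminate `v`. -/
def v : K := RatFunc.X

/-- The three states `-1, 0, 1`. -/
inductive St where
  | neg : St
  | zero : St
  | pos : St
deriving DecidableEq

instance : Fintype St where
  elems := {St.neg, St.zero, St.pos}
  complete := fun x => by cases x <;> simp

/-- The integer value of a state. -/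
def stval : St → ℤ
  | .neg => -1
  | .zero => 0
  | .pos => 1

/-- The order `-1 < 0 < 1` on states. -/
def stLt (a b : St) : Prop := stval a < stval b

/-- The weight `μ(s, j) ∈ ℤ²`; `true` is the sign `+`, `false` is `-`. -/
def wt : Bool → St → ℤ × ℤ
  | true, .pos => (1, 0)
  | true, .zero => (-1, 1)
  | true, .neg => (0, -1)
  | false, .pos => (0, 1)
  | false, .zero => (1, -1)
  | false, .neg => (-1, 0)

/-- Total weight `Σ μ(s_k, j_k)` of a sign string and a state string. -/
def wtSum (S : List Bool) (J : List St) : ℤ × ℤ :=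
  ((S.zip J).map fun p => wt p.1 p.2).sum

/-- A state string is dominant if its lattice path stays in the dominant
Weyl chamber and returns to the origin. -/
def Dominant (S : List Bool) (J : List St) : Prop :=
  J.length = S.length ∧
  (∀ k : ℕ, 0 ≤ (wtSum (S.take k) (J.take k)).1 ∧ 0 ≤ (wtSum (S.take k) (J.take k)).2) ∧
  wtSum S J = 0

/-- Coefficients of `b^{+-}(1) ∈ V⁺ ⊗ V⁻`. -/
def bCpm : St → St → K
  | .pos, .neg => 1
  | .zero, .zero => v⁻¹
  | .neg, .pos => v⁻¹ ^ 2
  | _, _ => 0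

/-- Coefficients of `b^{-+}(1) ∈ V⁻ ⊗ V⁺`. -/
def bCmp : St → St → K
  | .pos, .neg => 1
  | .zero, .zero => v⁻¹
  | .neg, .pos => v⁻¹ ^ 2
  | _, _ => 0

/-- Matrix entries of `σ_{+-} : V⁺ ⊗ V⁻ → K`. -/
def sCpm : St → St → K
  | .neg, .pos => 1
  | .zero, .zero => v
  | .pos, .neg => v ^ 2
  | _, _ => 0

/-- Matrix entries of `σ_{-+} : V⁻ ⊗ V⁺ → K`. -/
def sCmp : St → St → K
  | .neg, .pos => 1
  | .zero, .zero => v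
  | .pos, .neg => v ^ 2
  | _, _ => 0

/-- `tYpp a b c` is the coefficient of `e_a ⊗ e_b` in `t^{++}_-(e_c)`. -/
def tYpp : St → St → St → K
  | .pos, .zero, .pos => 1
  | .zero, .pos, .pos => v⁻¹
  | .pos, .neg, .zero => 1
  | .neg, .pos, .zero => v⁻¹
  | .zero, .neg, .neg => 1
  | .neg, .zero, .neg => v⁻¹
  | _, _, _ => 0

/-- `tYmm a b c` is the coefficient of `e_a ⊗ e_b` in `t^{--}_+(e_c)`. -/
def tYmm : St → St → St → K
  | .pos, .zero, .pos => 1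
  | .zero, .pos, .pos => v⁻¹
  | .pos, .neg, .zero => 1
  | .neg, .pos, .zero => v⁻¹
  | .zero, .neg, .neg => 1
  | .neg, .zero, .neg => v⁻¹
  | _, _, _ => 0

/-- `tLpp a b c` is the coefficient of `e_c` in `t^-_{++}(e_a ⊗ e_b)`. -/
def tLpp : St → St → St → K
  | .pos, .zero, .pos => v
  | .zero, .pos, .pos => 1
  | .pos, .neg, .zero => v
  | .neg, .pos, .zero => 1
  | .zero, .neg, .neg => v
  | .neg, .zero, .neg => 1
  | _, _, _ => 0

/-- `tLmm a b c` is the coefficient of `e_c` in `t^+_{--}(e_a ⊗ e_b)`. -/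
def tLmm : St → St → St → K
  | .pos, .zero, .pos => v
  | .zero, .pos, .pos => 1
  | .pos, .neg, .zero => v
  | .neg, .pos, .zero => 1
  | .zero, .neg, .neg => v
  | .neg, .zero, .neg => 1
  | _, _, _ => 0

/-- Matrix entries of the H-map
`(id_{V⁺} ⊗ t^-_{++}) ∘ (t^{++}_- ⊗ id_{V⁺}) : V⁻ ⊗ V⁺ → V⁺ ⊗ V⁻`:
`HCpm a b c d` is the coefficient of `e_a ⊗ e_b` in the image of `e_c ⊗ e_d`. -/
def HCpm (a b c d : St) : K := ∑ y : St, tYpp a y c * tLpp y d b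

/-- Matrix entries of the H-map
`(t^-_{++} ⊗ id_{V⁺}) ∘ (id_{V⁺} ⊗ t^{++}_-) : V⁺ ⊗ V⁻ → V⁻ ⊗ V⁺`:
`HCmp a b c d` is the coefficient of `e_a ⊗ e_b` in the image of `e_c ⊗ e_d`. -/
def HCmp (a b c d : St) : K := ∑ x : St, tLpp c x a * tYpp x b d

/-- State patterns of the three H-rules: `(j_k, j_{k+1})` on top, the
replacement below. -/
inductive HPat : St → St → St → St → Prop where
  | h1 : HPat .pos .zero .zero .pos
  | h2 : HPat .zero .zero .neg .pos
  | h3 : HPat .zero .neg .neg .zero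

/-- State patterns of the three Y-rules. -/
inductive YPat : St → St → St → Prop where
  | y1 : YPat .pos .zero .pos
  | y2 : YPat .pos .neg .zero
  | y3 : YPat .zero .neg .neg

/-- One application of a growth rule, rewriting `(S, J)` to `(S', J')`. -/
inductive Step : List Bool → List St → List Bool → List St → Prop where
  | hstep (A B : List Bool) (P Q : List St) (s1 s2 : Bool) (j1 j2 j1' j2' : St)
      (hl : A.length = P.length) (hs : s1 ≠ s2) (hp : HPat j1 j2 j1' j2') :
      Step (A ++ s1 :: s2 :: B) (P ++ j1 :: j2 :: Q)
        (A ++ (!s1) :: (!s2) :: B) (P ++ j1' :: j2' :: Q)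
  | ustep (A B : List Bool) (P Q : List St) (s1 s2 : Bool)
      (hl : A.length = P.length) (hs : s1 ≠ s2) :
      Step (A ++ s1 :: s2 :: B) (P ++ St.pos :: St.neg :: Q) (A ++ B) (P ++ Q)
  | ystep (A B : List Bool) (P Q : List St) (s : Bool) (j1 j2 j' : St)
      (hl : A.length = P.length) (hp : YPat j1 j2 j') :
      Step (A ++ s :: s :: B) (P ++ j1 :: j2 :: Q) (A ++ (!s) :: B) (P ++ j' :: Q)

/-- A complete execution of the growth algorithm from `(S, J)` down to the
pair of empty strings. -/
inductive Exec : List Bool → List St → Type where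
  | nil : Exec [] []
  | hstep (A B : List Bool) (P Q : List St) (s1 s2 : Bool) (j1 j2 j1' j2' : St)
      (hl : A.length = P.length) (hs : s1 ≠ s2) (hp : HPat j1 j2 j1' j2')
      (e : Exec (A ++ (!s1) :: (!s2) :: B) (P ++ j1' :: j2' :: Q)) :
      Exec (A ++ s1 :: s2 :: B) (P ++ j1 :: j2 :: Q)
  | ustep (A B : List Bool) (P Q : List St) (s1 s2 : Bool)
      (hl : A.length = P.length) (hs : s1 ≠ s2)
      (e : Exec (A ++ B) (P ++ Q)) :
      Exec (A ++ s1 :: s2 :: B) (P ++ St.pos :: St.neg :: Q)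
  | ystep (A B : List Bool) (P Q : List St) (s : Bool) (j1 j2 j' : St)
      (hl : A.length = P.length) (hp : YPat j1 j2 j')
      (e : Exec (A ++ (!s) :: B) (P ++ j' :: Q)) :
      Exec (A ++ s :: s :: B) (P ++ j1 :: j2 :: Q)

/-- The web tensor of an execution, as coordinates with respect to the basis
`e^S_J` of `V^S`: `web e L` is the coefficient of `e^S_L`. -/
def web : {S : List Bool} → {J : List St} → Exec S J → List St → K
  | _, _, .nil, L => if L = [] then 1 else 0
  | _, _, .hstep A _ _ _ s1 _ _ _ _ _ _ _ _ e, L =>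
      match L.drop A.length with
      | a :: b :: R =>
          ∑ c : St, ∑ d : St,
            (if s1 then HCpm a b c d else HCmp a b c d) *
              web e (L.take A.length ++ c :: d :: R)
      | _ => 0
  | _, _, .ustep A _ _ _ s1 _ _ _ e, L =>
      match L.drop A.length with
      | a :: b :: R => (if s1 then bCpm a b else bCmp a b) * web e (L.take A.length ++ R)
      | _ => 0
  | _, _, .ystep A _ _ _ s _ _ _ _ _ e, L =>
      match L.drop A.length with
      | a :: b :: R =>
          ∑ c : St, (if s then tYpp a b c else tYmm a b c) * web e (L.take A.length ++ c :: R)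
      | _ => 0

/-- `c ∈ v⁻¹ ℤ[v⁻¹]`: a polynomial in `v⁻¹` with zero constant term. -/
def ZeroConst (c : K) : Prop :=
  ∃ p : Polynomial ℤ, p.coeff 0 = 0 ∧ c = Polynomial.aeval v⁻¹ p

/-- `x` has the negative-exponent property relative to a state string `J`
(`n` is the length of the ambient sign string). -/
def NegExpProp (n : ℕ) (x : List St → K) (J : List St) : Prop :=
  x J = 1 ∧ ∀ J' : List St, J'.length = n → J' ≠ J → ZeroConst (x J')

/-- `c ∈ ℕ[v, v⁻¹]`: a Laurent polynomial with nonnegative integer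
coefficients. -/
def IsNatLaurent (c : K) : Prop :=
  ∃ (p : Polynomial ℕ) (m : ℕ), c = v⁻¹ ^ m * Polynomial.aeval v p

/-- `c ∈ ℤ[v⁻¹]`. -/
def InZInv (c : K) : Prop := ∃ p : Polynomial ℤ, c = Polynomial.aeval v⁻¹ p

/-- Property P: all coefficients lie in `ℤ[v⁻¹]` and at most one of them has a
nonzero constant term. -/
def PropP (n : ℕ) (x : List St → K) : Prop :=
  (∀ J : List St, J.length = n → InZInv (x J)) ∧
  ∀ J1 J2 : List St, J1.length = n → J2.length = n →
    ¬ ZeroConst (x J1) → ¬ ZeroConst (x J2) → J1 = J2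

/-- The sign string `(+,+,−,−,+,+,−,−,+,+,−,−)`. -/
def base : List Bool :=
  [true, true, false, false, true, true, false, false, true, true, false, false]

lemma wtSum_cons (s : Bool) (j : St) (S : List Bool) (J : List St) :
    wtSum (s :: S) (j :: J) = wt s j + wtSum S J := by
  simp [wtSum]

lemma wtSum_append (A S : List Bool) (P J : List St) (hl : A.length = P.length) :
    wtSum (A ++ S) (P ++ J) = wtSum A P + wtSum S J := by
  simp [wtSum, List.zip_append hl]

/-- The lattice path of `(S, J)` started at `x` stays in the dominant chamber. The order on `ℤ × ℤ`
is componentwise; indices `k` past the end of the strings repeat the endpoint. -/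
def StaysFrom (x : ℤ × ℤ) (S : List Bool) (J : List St) : Prop :=
  ∀ k : ℕ, 0 ≤ x + wtSum (S.take k) (J.take k)

lemma dominant_iff (S : List Bool) (J : List St) :
    Dominant S J ↔ J.length = S.length ∧ StaysFrom 0 S J ∧ wtSum S J = 0 := by
  simp [Dominant, StaysFrom, Prod.le_def]

lemma StaysFrom.start {x : ℤ × ℤ} {S : List Bool} {J : List St} (h : StaysFrom x S J) :
    0 ≤ x := by
  simpa [wtSum] using h 0

lemma staysFrom_cons (x : ℤ × ℤ) (s : Bool) (j : St) (S : List Bool) (J : List St) :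
    StaysFrom x (s :: S) (j :: J) ↔ 0 ≤ x ∧ StaysFrom (x + wt s j) S J := by
  refine ⟨fun h => ⟨h.start, fun k => ?_⟩, fun ⟨h0, h⟩ k => ?_⟩
  · simpa [wtSum_cons, add_assoc] using h (k + 1)
  · cases k with
    | zero => simpa [wtSum] using h0
    | succ k => simpa [wtSum_cons, add_assoc] using h k

/-- Replacing a suffix is harmless if it is harmless from every starting point. -/
lemma StaysFrom.append_left {S S' : List Bool} {J J' : List St}
    (h : ∀ y, StaysFrom y S J → StaysFrom y S' J') :
    ∀ (A : List Bool) (P : List St), A.length = P.length →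
      ∀ x, StaysFrom x (A ++ S) (P ++ J) → StaysFrom x (A ++ S') (P ++ J')
  | [], [], _, x, hx => h x hx
  | s :: A, j :: P, hl, x, hx => by
    simp only [List.cons_append, staysFrom_cons] at hx ⊢
    exact ⟨hx.1, StaysFrom.append_left h A P (by simpa using hl) _ hx.2⟩

/-- A rewriting of suffixes that preserves the length condition, the weight and the chamber condition
from every starting point can be performed after any common prefix. -/
lemma preserves_of_local {A S S' : List Bool} {P J J' : List St} (hl : A.length = P.length)
    (hlen : J.length = S.length → J'.length = S'.length)
    (hw : wtSum S J = wtSum S' J')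
    (h : ∀ y, StaysFrom y S J → StaysFrom y S' J') :
    wtSum (A ++ S) (P ++ J) = wtSum (A ++ S') (P ++ J') ∧
      (Dominant (A ++ S) (P ++ J) → Dominant (A ++ S') (P ++ J')) := by
  have hw' : wtSum (A ++ S) (P ++ J) = wtSum (A ++ S') (P ++ J') := by
    rw [wtSum_append _ _ _ _ hl, wtSum_append _ _ _ _ hl, hw]
  refine ⟨hw', fun hd => ?_⟩
  rw [dominant_iff] at hd ⊢
  obtain ⟨h1, h2, h3⟩ := hd
  refine ⟨?_, StaysFrom.append_left h A P hl 0 h2, hw' ▸ h3⟩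
  simp only [List.length_append] at h1 ⊢
  have := hlen (by omega)
  omega

lemma HPat.wt_eq {s1 s2 : Bool} {j1 j2 j1' j2' : St} (hs : s1 ≠ s2) (hp : HPat j1 j2 j1' j2') :
    wt s1 j1 + wt s2 j2 = wt (!s1) j1' + wt (!s2) j2' := by
  cases hp <;> cases s1 <;> cases s2 <;> first | rfl | exact absurd rfl hs

/-- The middle point created by an H-rule lies in the chamber if the three old points do. -/
lemma HPat.middle_nonneg {s1 s2 : Bool} {j1 j2 j1' j2' : St} (hs : s1 ≠ s2)
    (hp : HPat j1 j2 j1' j2') (y : ℤ × ℤ) (h0 : 0 ≤ y) (h1 : 0 ≤ y + wt s1 j1)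
    (h2 : 0 ≤ y + wt s1 j1 + wt s2 j2) : 0 ≤ y + wt (!s1) j1' := by
  obtain ⟨a, b⟩ := y
  cases hp <;> cases s1 <;> cases s2 <;> first
    | exact absurd rfl hs
    | simp [wt, Prod.le_def] at h0 h1 h2 ⊢
      omega

lemma wt_pos_add_neg {s1 s2 : Bool} (hs : s1 ≠ s2) : wt s1 .pos + wt s2 .neg = 0 := by
  cases s1 <;> cases s2 <;> first | rfl | exact absurd rfl hs

lemma YPat.wt_eq (s : Bool) {j1 j2 j' : St} (hp : YPat j1 j2 j') :
    wt s j1 + wt s j2 = wt (!s) j' := by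
  cases hp <;> cases s <;> rfl

/-- a growth rule preserves the total weight, and it preserves
dominance. -/
theorem step_preserves_weight_and_dominance (S S' : List Bool) (J J' : List St)
    (h : Step S J S' J') :
    wtSum S J = wtSum S' J' ∧ (Dominant S J → Dominant S' J') := by
  cases h with
  | hstep A B P Q s1 s2 j1 j2 j1' j2' hl hs hp =>
    refine preserves_of_local hl (by simp) ?_ fun y hy => ?_
    · simp only [wtSum_cons, ← add_assoc, hp.wt_eq hs]
    · simp only [staysFrom_cons] at hy ⊢
      obtain ⟨h0, h1, h2⟩ := hy
      refine ⟨h0, hp.middle_nonneg hs y h0 h1 h2.start, ?_⟩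
      rwa [add_assoc, ← hp.wt_eq hs, ← add_assoc]
  | ustep A B P Q s1 s2 hl hs =>
    refine preserves_of_local hl (by simp) ?_ fun y hy => ?_
    · simp only [wtSum_cons, ← add_assoc, wt_pos_add_neg hs, zero_add]
    · simp only [staysFrom_cons] at hy
      simpa only [add_assoc, wt_pos_add_neg hs, add_zero] using hy.2.2
  | ystep A B P Q s j1 j2 j' hl hp =>
    refine preserves_of_local hl (by simp) ?_ fun y hy => ?_
    · simp only [wtSum_cons, ← add_assoc, hp.wt_eq]
    · simp only [staysFrom_cons] at hy ⊢
      refine ⟨hy.1, ?_⟩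
      simpa only [add_assoc, hp.wt_eq] using hy.2.2

end
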